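/- Let X be a nonempty compact metric space and β, τ ∈ (0,1). Then d̃_{β,τ}(μ,ν) := Σ_{i∈ℤ} (τ^{|i|} / β^i) · d_{β^i}(μ,ν) defines a metric on the set of idempotent probabilities on X: it is symmetric, satisfies the triangle inequality, and d̃_{β,τ}(μ,ν) = 0 if and only if μ(f) = ν(f) for all f ∈ C(X,ℝ). -/

import Mathlib

def IsIdempotentProb {X : Type*} [TopologicalSpace X] (μ : C(X, ℝ) → ℝ) : Prop :=
  (∀ (c : ℝ) (f : C(X, ℝ)), μ (ContinuousMap.const X c + f) = c + μ f) ∧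
  (∀ f g : C(X, ℝ), μ (f ⊔ g) = max (μ f) (μ g)) ∧
  μ 0 = 0

/-- The pseudometric `d_a` on idempotent probabilities. -/
noncomputable def dLip {X : Type*} [MetricSpace X] (a : ℝ) (μ ν : C(X, ℝ) → ℝ) : ℝ :=
  sSup { r : ℝ | ∃ g : C(X, ℝ), LipschitzWith (Real.toNNReal a) g ∧ r = |μ g - ν g| }

/-- The metric `d̃_{β,τ}` on idempotent probabilities. -/
noncomputable def dtilde {X : Type*} [MetricSpace X] (β τ : ℝ) (μ ν : C(X, ℝ) → ℝ) : ℝ :=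
  ∑' i : ℤ, (τ ^ i.natAbs / β ^ i) * dLip (β ^ i) μ ν

/-!
On `a`-Lipschitz functions a functional that is Lipschitz for the uniform distance and fixes the
constants varies by at most a multiple of `a`, so `d_a` grows at most linearly in `a`, and the
factor `1 / β ^ i` leaves a series dominated by `∑ τ ^ |i|`. If the sum vanishes, so does `d_a` for
arbitrarily large `a`; the two functionals then agree on all Lipschitz functions, and these are
dense in `C(X, ℝ)` by the lattice form of the Stone–Weierstrass theorem. Idempotent probabilities
are among these functionals because they are monotone and commute with the addition of constants.
-/

open Filter Metric

open scoped NNReal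

lemma summable_pow_natAbs {K : Type*} [NormedDivisionRing K] [CompleteSpace K] {r : K}
    (hr : ‖r‖ < 1) : Summable fun i : ℤ => r ^ i.natAbs := by
  have hgeom := summable_geometric_of_norm_lt_one hr
  apply Summable.of_nat_of_neg <;> simpa using hgeom

lemma frequently_atTop_exists_zpow_eq {K : Type*} [Field K] [LinearOrder K] [IsStrictOrderedRing K]
    [Archimedean K] {β : K} (hβ0 : 0 < β) (hβ1 : β ≠ 1) :
    ∃ᶠ a : K in atTop, ∃ i : ℤ, β ^ i = a := by
  refine frequently_atTop.2 fun b => ?_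
  rcases hβ1.lt_or_gt with hlt | hgt
  · obtain ⟨n, hn⟩ := pow_unbounded_of_one_lt b ((one_lt_inv₀ hβ0).2 hlt)
    exact ⟨β⁻¹ ^ n, hn.le, -n, by simp⟩
  · obtain ⟨n, hn⟩ := pow_unbounded_of_one_lt b hgt
    exact ⟨β ^ n, hn.le, n, zpow_natCast β n⟩

lemma exists_lipschitzWith_eq_eq {X : Type*} [MetricSpace X] (v : X → ℝ) (x y : X) :
    ∃ g : C(X, ℝ), (∃ K : ℝ≥0, LipschitzWith K g) ∧ g x = v x ∧ g y = v y := by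
  let c : ℝ := (v y - v x) / dist x y
  have hlip : LipschitzWith (‖c‖₊ * 1) fun z => c * dist x z :=
    (lipschitzWith_smul c).comp (LipschitzWith.dist_right x)
  refine ⟨⟨fun z => v x + c * dist x z, by fun_prop⟩,
    ⟨_, (LipschitzWith.const (v x)).add hlip⟩, by simp, ?_⟩
  rcases eq_or_ne x y with rfl | hxy
  · simp
  · simp [c, div_mul_cancel₀ _ (dist_ne_zero.2 hxy)]

lemma dense_setOf_exists_lipschitzWith {X : Type*} [MetricSpace X] [CompactSpace X] :
    Dense {g : C(X, ℝ) | ∃ K : ℝ≥0, LipschitzWith K g} := by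
  refine dense_iff_closure_eq.2 (ContinuousMap.sublattice_closure_eq_top _ ?_ ?_ ?_ ?_)
  · exact ⟨0, 0, LipschitzWith.const 0⟩
  · rintro f ⟨K, hf⟩ g ⟨L, hg⟩
    exact ⟨_, hf.min hg⟩
  · rintro f ⟨K, hf⟩ g ⟨L, hg⟩
    exact ⟨_, hf.max hg⟩
  · exact exists_lipschitzWith_eq_eq

lemma dist_const_le_of_lipschitzWith {X Y : Type*} [PseudoMetricSpace X] [CompactSpace X]
    [PseudoMetricSpace Y] {K : ℝ≥0} {g : C(X, Y)} (hg : LipschitzWith K g) (x : X) :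
    dist g (ContinuousMap.const X (g x)) ≤ K * diam (Set.univ : Set X) := by
  refine (ContinuousMap.dist_le (by positivity)).2 fun y => (hg.dist_le_mul y x).trans ?_
  gcongr
  exact dist_le_diam_of_mem isBounded_of_compactSpace (Set.mem_univ y) (Set.mem_univ x)

lemma lipschitzWith_one_of_monotone_of_map_const_add {X : Type*} [TopologicalSpace X]
    [CompactSpace X] {μ : C(X, ℝ) → ℝ} (hmono : Monotone μ)
    (hadd : ∀ (c : ℝ) (f : C(X, ℝ)), μ (ContinuousMap.const X c + f) = c + μ f) :
    LipschitzWith 1 μ := by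
  refine LipschitzWith.of_le_add fun f g => ?_
  have hle : f ≤ ContinuousMap.const X (dist f g) + g := fun x => by
    have hx : f x - g x ≤ dist f g := (le_abs_self _).trans (f.dist_apply_le_dist x)
    simpa using sub_le_iff_le_add.1 hx
  calc μ f ≤ μ (ContinuousMap.const X (dist f g) + g) := hmono hle
    _ = μ g + dist f g := by rw [hadd, add_comm]

/-- A normalized Lipschitz functional on `C(X, ℝ)`: one that is Lipschitz, with some constant, for
the uniform distance and takes the value `c` at the constant function `c`. The metric `d̃_{β,τ}`
makes sense for all of these, which include the idempotent probabilities, the integrals against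
probability measures and, more generally, against signed measures of total mass one. -/
structure IsNormalizedLipschitz {X : Type*} [TopologicalSpace X] [CompactSpace X]
    (μ : C(X, ℝ) → ℝ) : Prop where
  exists_lipschitzWith : ∃ K : ℝ≥0, LipschitzWith K μ
  map_const : ∀ c : ℝ, μ (ContinuousMap.const X c) = c

namespace IsIdempotentProb

variable {X : Type*} [TopologicalSpace X] {μ : C(X, ℝ) → ℝ}

lemma monotone (hμ : IsIdempotentProb μ) : Monotone μ :=
  Monotone.of_map_sup hμ.2.1

lemma map_const (hμ : IsIdempotentProb μ) (c : ℝ) : μ (ContinuousMap.const X c) = c := by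
  simpa [hμ.2.2] using hμ.1 c 0

lemma isNormalizedLipschitz [CompactSpace X] (hμ : IsIdempotentProb μ) :
    IsNormalizedLipschitz μ where
  exists_lipschitzWith := ⟨1, lipschitzWith_one_of_monotone_of_map_const_add hμ.monotone hμ.1⟩
  map_const := hμ.map_const

end IsIdempotentProb

namespace IsNormalizedLipschitz

lemma continuous {X : Type*} [TopologicalSpace X] [CompactSpace X] {μ : C(X, ℝ) → ℝ}
    (hμ : IsNormalizedLipschitz μ) : Continuous μ :=
  hμ.exists_lipschitzWith.elim fun _ hK => hK.continuous

lemma nonempty {X : Type*} [TopologicalSpace X] [CompactSpace X] {μ : C(X, ℝ) → ℝ}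
    (hμ : IsNormalizedLipschitz μ) : Nonempty X := by
  by_contra hX
  have hconst : ContinuousMap.const X (0 : ℝ) = ContinuousMap.const X 1 :=
    ContinuousMap.ext fun x => (hX ⟨x⟩).elim
  have hzero_one : (0 : ℝ) = 1 := by rw [← hμ.map_const 0, hconst, hμ.map_const]
  exact zero_ne_one hzero_one

variable {X : Type*} [PseudoMetricSpace X] [CompactSpace X] {μ ν : C(X, ℝ) → ℝ}

lemma exists_abs_sub_apply_le (hμ : IsNormalizedLipschitz μ) (x : X) :
    ∃ C : ℝ, ∀ (a : ℝ≥0) (g : C(X, ℝ)), LipschitzWith a g → |μ g - g x| ≤ C * a := by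
  obtain ⟨K, hK⟩ := hμ.exists_lipschitzWith
  refine ⟨K * diam (Set.univ : Set X), fun a g hg => ?_⟩
  calc |μ g - g x| = dist (μ g) (μ (ContinuousMap.const X (g x))) := by
        rw [hμ.map_const, Real.dist_eq]
    _ ≤ K * dist g (ContinuousMap.const X (g x)) := hK.dist_le_mul _ _
    _ ≤ K * (a * diam (Set.univ : Set X)) := by
        gcongr
        exact dist_const_le_of_lipschitzWith hg x
    _ = K * diam (Set.univ : Set X) * a := by ring

lemma exists_abs_sub_le (hμ : IsNormalizedLipschitz μ) (hν : IsNormalizedLipschitz ν) :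
    ∃ C : ℝ, ∀ (a : ℝ≥0) (g : C(X, ℝ)), LipschitzWith a g → |μ g - ν g| ≤ C * a := by
  obtain ⟨x⟩ := hμ.nonempty
  obtain ⟨C, hC⟩ := hμ.exists_abs_sub_apply_le x
  obtain ⟨D, hD⟩ := hν.exists_abs_sub_apply_le x
  refine ⟨C + D, fun a g hg => ?_⟩
  calc |μ g - ν g| ≤ |μ g - g x| + |g x - ν g| := abs_sub_le _ _ _
    _ ≤ C * a + D * a := add_le_add (hC a g hg) (abs_sub_comm (g x) (ν g) ▸ hD a g hg)
    _ = (C + D) * a := (add_mul _ _ _).symm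

end IsNormalizedLipschitz

section dLip

variable {X : Type*} [MetricSpace X] {μ ν ρ : C(X, ℝ) → ℝ} {a : ℝ}

lemma dLip_nonneg (a : ℝ) (μ ν : C(X, ℝ) → ℝ) : 0 ≤ dLip a μ ν := by
  refine Real.sSup_nonneg ?_
  rintro _ ⟨g, -, rfl⟩
  exact abs_nonneg _

lemma dLip_comm (a : ℝ) (μ ν : C(X, ℝ) → ℝ) : dLip a μ ν = dLip a ν μ := by
  simp only [dLip, abs_sub_comm]

lemma dLip_le {B : ℝ}
    (h : ∀ g : C(X, ℝ), LipschitzWith a.toNNReal g → |μ g - ν g| ≤ B) : dLip a μ ν ≤ B := by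
  refine csSup_le ⟨_, 0, LipschitzWith.const' 0, rfl⟩ ?_
  rintro _ ⟨g, hg, rfl⟩
  exact h g hg

lemma dLip_self (a : ℝ) (μ : C(X, ℝ) → ℝ) : dLip a μ μ = 0 :=
  (dLip_le fun g _ => by simp).antisymm (dLip_nonneg a μ μ)

variable [CompactSpace X]

lemma exists_dLip_le (hμ : IsNormalizedLipschitz μ) (hν : IsNormalizedLipschitz ν) :
    ∃ C : ℝ, ∀ a : ℝ, 0 ≤ a → dLip a μ ν ≤ C * a := by
  obtain ⟨C, hC⟩ := hμ.exists_abs_sub_le hν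
  refine ⟨C, fun a ha => dLip_le fun g hg => ?_⟩
  simpa only [Real.coe_toNNReal a ha] using hC _ g hg

lemma abs_sub_le_dLip (hμ : IsNormalizedLipschitz μ) (hν : IsNormalizedLipschitz ν)
    {g : C(X, ℝ)} (hg : LipschitzWith a.toNNReal g) : |μ g - ν g| ≤ dLip a μ ν := by
  obtain ⟨C, hC⟩ := hμ.exists_abs_sub_le hν
  refine le_csSup ⟨C * a.toNNReal, ?_⟩ ⟨g, hg, rfl⟩
  rintro _ ⟨f, hf, rfl⟩
  exact hC _ f hf

lemma dLip_triangle (hμ : IsNormalizedLipschitz μ) (hν : IsNormalizedLipschitz ν)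
    (hρ : IsNormalizedLipschitz ρ) (a : ℝ) : dLip a μ ρ ≤ dLip a μ ν + dLip a ν ρ :=
  dLip_le fun g hg => (abs_sub_le _ (ν g) _).trans
    (add_le_add (abs_sub_le_dLip hμ hν hg) (abs_sub_le_dLip hν hρ hg))

lemma eq_of_frequently_dLip_eq_zero (hμ : IsNormalizedLipschitz μ)
    (hν : IsNormalizedLipschitz ν) (h : ∃ᶠ a in atTop, dLip a μ ν = 0) : μ = ν := by
  refine Continuous.ext_on dense_setOf_exists_lipschitzWith hμ.continuous hν.continuous ?_
  rintro g ⟨K, hg⟩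
  obtain ⟨a, hKa, ha⟩ := frequently_atTop.1 h K
  have hle := abs_sub_le_dLip hμ hν (hg.weaken (NNReal.le_toNNReal_of_coe_le hKa))
  rw [ha] at hle
  exact sub_eq_zero.1 (abs_nonpos_iff.1 hle)

end dLip

section dtilde

variable {X : Type*} [MetricSpace X] {μ ν ρ : C(X, ℝ) → ℝ} {β τ : ℝ}

lemma dtilde_comm (β τ : ℝ) (μ ν : C(X, ℝ) → ℝ) : dtilde β τ μ ν = dtilde β τ ν μ := by
  simp only [dtilde, dLip_comm _ μ ν]

lemma dtilde_self (β τ : ℝ) (μ : C(X, ℝ) → ℝ) : dtilde β τ μ μ = 0 := by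
  simp [dtilde, dLip_self]

variable [CompactSpace X]

lemma summable_dtilde (hβ0 : 0 < β) (hτ0 : 0 ≤ τ) (hτ1 : τ < 1) (hμ : IsNormalizedLipschitz μ)
    (hν : IsNormalizedLipschitz ν) :
    Summable fun i : ℤ => (τ ^ i.natAbs / β ^ i) * dLip (β ^ i) μ ν := by
  obtain ⟨C, hC⟩ := exists_dLip_le hμ hν
  have hτ : ‖τ‖ < 1 := by rwa [Real.norm_of_nonneg hτ0]
  refine Summable.of_nonneg_of_le (fun i => ?_) (fun i => ?_)
    ((summable_pow_natAbs hτ).mul_right C)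
  · exact mul_nonneg (by positivity) (dLip_nonneg _ _ _)
  · have hβi : 0 < β ^ i := zpow_pos hβ0 i
    calc τ ^ i.natAbs / β ^ i * dLip (β ^ i) μ ν
        ≤ τ ^ i.natAbs / β ^ i * (C * β ^ i) := by
          gcongr
          exact hC _ hβi.le
      _ = τ ^ i.natAbs * C := by field_simp

lemma dtilde_triangle (hβ0 : 0 < β) (hτ0 : 0 ≤ τ) (hτ1 : τ < 1) (hμ : IsNormalizedLipschitz μ)
    (hν : IsNormalizedLipschitz ν) (hρ : IsNormalizedLipschitz ρ) :
    dtilde β τ μ ρ ≤ dtilde β τ μ ν + dtilde β τ ν ρ := by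
  have hsum_μν := summable_dtilde hβ0 hτ0 hτ1 hμ hν
  have hsum_νρ := summable_dtilde hβ0 hτ0 hτ1 hν hρ
  unfold dtilde
  rw [← hsum_μν.tsum_add hsum_νρ]
  refine (summable_dtilde hβ0 hτ0 hτ1 hμ hρ).tsum_le_tsum (fun i => ?_) (hsum_μν.add hsum_νρ)
  rw [← mul_add]
  gcongr
  exact dLip_triangle hμ hν hρ _

lemma dLip_zpow_eq_zero_of_dtilde_eq_zero (hβ0 : 0 < β) (hτ0 : 0 < τ) (hτ1 : τ < 1)
    (hμ : IsNormalizedLipschitz μ) (hν : IsNormalizedLipschitz ν) (h : dtilde β τ μ ν = 0)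
    (i : ℤ) : dLip (β ^ i) μ ν = 0 := by
  have hsum := (summable_dtilde hβ0 hτ0.le hτ1 hμ hν).hasSum
  rw [← dtilde, h, hasSum_zero_iff_of_nonneg fun j => mul_nonneg (by positivity)
    (dLip_nonneg _ _ _)] at hsum
  have hweight : τ ^ i.natAbs / β ^ i ≠ 0 := by positivity
  exact (mul_eq_zero.1 (congrFun hsum i)).resolve_left hweight

lemma dtilde_eq_zero_iff (hβ0 : 0 < β) (hβ1 : β ≠ 1) (hτ0 : 0 < τ) (hτ1 : τ < 1)
    (hμ : IsNormalizedLipschitz μ) (hν : IsNormalizedLipschitz ν) :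
    dtilde β τ μ ν = 0 ↔ μ = ν := by
  refine ⟨fun h => eq_of_frequently_dLip_eq_zero hμ hν ?_, fun h => h ▸ dtilde_self β τ μ⟩
  refine (frequently_atTop_exists_zpow_eq hβ0 hβ1).mono ?_
  rintro _ ⟨i, rfl⟩
  exact dLip_zpow_eq_zero_of_dtilde_eq_zero hβ0 hτ0 hτ1 hμ hν h i

end dtilde

theorem dtilde_is_metric_general {X : Type*} [MetricSpace X] [CompactSpace X]
    (β τ : ℝ) (hβ0 : 0 < β) (hβ1 : β ≠ 1) (hτ0 : 0 < τ) (hτ1 : τ < 1) :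
    (∀ μ ν : C(X, ℝ) → ℝ, dtilde β τ μ ν = dtilde β τ ν μ) ∧
    (∀ μ ν ρ : C(X, ℝ) → ℝ, IsNormalizedLipschitz μ → IsNormalizedLipschitz ν →
      IsNormalizedLipschitz ρ → dtilde β τ μ ρ ≤ dtilde β τ μ ν + dtilde β τ ν ρ) ∧
    (∀ μ ν : C(X, ℝ) → ℝ, IsNormalizedLipschitz μ → IsNormalizedLipschitz ν →
      (dtilde β τ μ ν = 0 ↔ ∀ f : C(X, ℝ), μ f = ν f)) :=
  ⟨dtilde_comm β τ,
    fun _ _ _ hμ hν hρ => dtilde_triangle hβ0 hτ0.le hτ1 hμ hν hρ,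
    fun _ _ hμ hν => (dtilde_eq_zero_iff hβ0 hβ1 hτ0 hτ1 hμ hν).trans funext_iff⟩

theorem dtilde_is_metric
    {X : Type*} [MetricSpace X] [CompactSpace X] [Nonempty X]
    (β τ : ℝ) (hβ0 : 0 < β) (hβ1 : β < 1) (hτ0 : 0 < τ) (hτ1 : τ < 1) :
    (∀ μ ν : C(X, ℝ) → ℝ, IsIdempotentProb μ → IsIdempotentProb ν →
      dtilde β τ μ ν = dtilde β τ ν μ) ∧
    (∀ μ ν ρ : C(X, ℝ) → ℝ, IsIdempotentProb μ → IsIdempotentProb ν → IsIdempotentProb ρ →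
      dtilde β τ μ ρ ≤ dtilde β τ μ ν + dtilde β τ ν ρ) ∧
    (∀ μ ν : C(X, ℝ) → ℝ, IsIdempotentProb μ → IsIdempotentProb ν →
      (dtilde β τ μ ν = 0 ↔ ∀ f : C(X, ℝ), μ f = ν f)) := by
  obtain ⟨hcomm, htriangle, heq_zero⟩ := dtilde_is_metric_general (X := X) β τ hβ0 hβ1.ne hτ0 hτ1
  exact ⟨fun μ ν _ _ => hcomm μ ν,
    fun μ ν ρ hμ hν hρ => htriangle μ ν ρ hμ.isNormalizedLipschitz hν.isNormalizedLipschitz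
      hρ.isNormalizedLipschitz,
    fun μ ν hμ hν => heq_zero μ ν hμ.isNormalizedLipschitz hν.isNormalizedLipschitz⟩
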